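/- arXiv:2501.17447 — 9 statements merged into one kernel-verified Lean document; each statement's English description precedes it below -/
import Mathlib

section
/- Let n : ℕ and let S be a ZMod 2-submodule of (Fin n → ZMod 2) × (Fin n → ZMod 2). Then S is generated by its X-type elements (those with zero second component) together with its Z-type elements (those with zero first component) — i.e. S = (S ⊓ LinearMap.ker (LinearMap.snd (ZMod 2) _ _)) ⊔ (S ⊓ LinearMap.ker (LinearMap.fst (ZMod 2) _ _)) — if and only if Module.finrank (ZMod 2) (S.map (LinearMap.fst (ZMod 2) _ _)) + Module.finrank (ZMod 2) (S.map (LinearMap.snd (ZMod 2) _ _)) = Module.finrank (ZMod 2) S. -/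
/-!
Rank–nullity applied to the two projections restricted to `S` gives
`rank G_X + dim S_Z = dim S = rank G_Z + dim S_X`, where `S_X` and `S_Z` are the subspaces of
X-type and Z-type elements of `S`. These meet only in `0`, so `S_X ⊔ S_Z ≤ S` has dimension
`dim S_X + dim S_Z = 2 dim S - (rank G_X + rank G_Z)`, and it is all of `S` exactly when this
number is `dim S`.
-/

/-- Rank–nullity for the restriction of `f` to the subspace `S`. -/
theorem finrank_map_add_finrank_inf_ker {K V W : Type*} [Field K] [AddCommGroup V] [Module K V]
    [FiniteDimensional K V] [AddCommGroup W] [Module K W] (f : V →ₗ[K] W) (S : Submodule K V) :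
    Module.finrank K (S.map f) + Module.finrank K (S ⊓ LinearMap.ker f : Submodule K V)
      = Module.finrank K S := by
  have h := LinearMap.finrank_range_add_finrank_ker (f.domRestrict S)
  rw [LinearMap.range_domRestrict] at h
  rw [← h, ← Submodule.map_comap_subtype, Submodule.finrank_map_subtype_eq]
  rfl

/-- A stabilizer group (as a binary symplectic submodule) is CSS, i.e. generated by its
X-type elements (zero Z-part) and its Z-type elements (zero X-part), if and only if
`rank G_X + rank G_Z = finrank S`. -/
theorem css_iff_rank_add_rank (n : ℕ)
    (S : Submodule (ZMod 2) ((Fin n → ZMod 2) × (Fin n → ZMod 2))) :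
    S = (S ⊓ LinearMap.ker (LinearMap.snd (ZMod 2) (Fin n → ZMod 2) (Fin n → ZMod 2)))
        ⊔ (S ⊓ LinearMap.ker (LinearMap.fst (ZMod 2) (Fin n → ZMod 2) (Fin n → ZMod 2)))
      ↔ Module.finrank (ZMod 2)
            (S.map (LinearMap.fst (ZMod 2) (Fin n → ZMod 2) (Fin n → ZMod 2)))
          + Module.finrank (ZMod 2)
            (S.map (LinearMap.snd (ZMod 2) (Fin n → ZMod 2) (Fin n → ZMod 2)))
          = Module.finrank (ZMod 2) S := by
  have hX := finrank_map_add_finrank_inf_ker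
    (LinearMap.fst (ZMod 2) (Fin n → ZMod 2) (Fin n → ZMod 2)) S
  have hZ := finrank_map_add_finrank_inf_ker
    (LinearMap.snd (ZMod 2) (Fin n → ZMod 2) (Fin n → ZMod 2)) S
  set A := S ⊓ LinearMap.ker (LinearMap.snd (ZMod 2) (Fin n → ZMod 2) (Fin n → ZMod 2)) with hA
  set B := S ⊓ LinearMap.ker (LinearMap.fst (ZMod 2) (Fin n → ZMod 2) (Fin n → ZMod 2)) with hB
  have hAB : A ⊓ B = ⊥ := by
    rw [eq_bot_iff]
    rintro v ⟨⟨-, h2⟩, ⟨-, h1⟩⟩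
    exact Prod.ext h1 h2
  have hle : A ⊔ B ≤ S := sup_le inf_le_left inf_le_left
  have hsum := Submodule.finrank_sup_add_finrank_inf_eq A B
  rw [hAB, finrank_bot] at hsum
  constructor
  · intro h
    rw [← h] at hsum
    omega
  · intro h
    exact (Submodule.eq_of_le_of_finrank_eq hle (by omega)).symm
end

section
/- Let ι be a finite type, R a ring, M : ι → Type a family of R-modules, and V a submodule of Π i, M i. If V decomposes across a set A : Set ι and V also decomposes across a set B : Set ι, then V decomposes across the common refinement: V = (V ⊓ C(A ∩ B)) ⊔ (V ⊓ C(A ∩ Bᶜ)) ⊔ (V ⊓ C(Aᶜ ∩ B)) ⊔ (V ⊓ C(Aᶜ ∩ Bᶜ)). -/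
/-!
Splitting a vector of `V` along `B` never enlarges its support: the two pieces have disjoint
supports, so nothing can cancel in their sum. Hence, by `inf_coordC_le`, the summands
`V ⊓ coordC R M A` and `V ⊓ coordC R M Aᶜ` of `V` each split further along `B`.
-/

/-- The submodule of `Π i, M i` consisting of vectors supported inside `Q`. -/
def coordC (R : Type*) [Ring R] {ι : Type*} (M : ι → Type*) [∀ i, AddCommGroup (M i)]
    [∀ i, Module R (M i)] (Q : Set ι) : Submodule R (∀ i, M i) where
  carrier := {v | ∀ i ∉ Q, v i = 0}
  add_mem' := by
    intro a b ha hb i hi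
    simp [Pi.add_apply, ha i hi, hb i hi]
  zero_mem' := by
    intro i _
    rfl
  smul_mem' := by
    intro c v hv i hi
    simp [Pi.smul_apply, hv i hi]

/-- If `V` decomposes across `B`, then so does its part supported in any `A`. Writing `v = x + y`
with `x` supported in `B` and `y` in `Bᶜ`, at each coordinate one of `x`, `y` vanishes, so `v i = 0`
forces `x i = y i = 0`; hence `x` and `y` inherit the support condition of `v`. -/
theorem inf_coordC_le {ι : Type*} (R : Type*) [Ring R] (M : ι → Type*)
    [∀ i, AddCommGroup (M i)] [∀ i, Module R (M i)]
    (V : Submodule R (∀ i, M i)) (A B : Set ι)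
    (hB : V = (V ⊓ coordC R M B) ⊔ (V ⊓ coordC R M Bᶜ)) :
    V ⊓ coordC R M A ≤ (V ⊓ coordC R M (A ∩ B)) ⊔ (V ⊓ coordC R M (A ∩ Bᶜ)) := by
  rintro v ⟨hv, hvA⟩
  rw [SetLike.mem_coe, hB] at hv
  obtain ⟨x, ⟨hxV, hx⟩, y, ⟨hyV, hy⟩, rfl⟩ := Submodule.mem_sup.1 hv
  refine Submodule.add_mem_sup ⟨hxV, fun i hi => ?_⟩ ⟨hyV, fun i hi => ?_⟩
  · by_cases hiB : i ∈ B
    · have hsum : x i + y i = 0 := hvA i fun hiA => hi ⟨hiA, hiB⟩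
      rwa [hy i (not_not_intro hiB), add_zero] at hsum
    · exact hx i hiB
  · by_cases hiB : i ∈ B
    · exact hy i (not_not_intro hiB)
    · have hsum : x i + y i = 0 := hvA i fun hiA => hi ⟨hiA, hiB⟩
      rwa [hx i hiB, zero_add] at hsum

/-- If a submodule `V` of a finite product decomposes across `A` and across `B`, then it
decomposes across the common refinement of the two bipartitions. -/
theorem decompose_refinement {ι : Type*} [Finite ι] (R : Type*) [Ring R] (M : ι → Type*)
    [∀ i, AddCommGroup (M i)] [∀ i, Module R (M i)]
    (V : Submodule R (∀ i, M i)) (A B : Set ι)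
    (hA : V = (V ⊓ coordC R M A) ⊔ (V ⊓ coordC R M Aᶜ))
    (hB : V = (V ⊓ coordC R M B) ⊔ (V ⊓ coordC R M Bᶜ)) :
    V = (V ⊓ coordC R M (A ∩ B)) ⊔ (V ⊓ coordC R M (A ∩ Bᶜ))
        ⊔ (V ⊓ coordC R M (Aᶜ ∩ B)) ⊔ (V ⊓ coordC R M (Aᶜ ∩ Bᶜ)) := by
  apply le_antisymm
  · rw [sup_assoc]
    exact hA.le.trans (sup_le_sup (inf_coordC_le R M V A B hB) (inf_coordC_le R M V Aᶜ B hB))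
  · exact sup_le (sup_le (sup_le inf_le_left inf_le_left) inf_le_left) inf_le_left
end

section
/- Let n m : ℕ, regard P(n) = (Fin n → ZMod 2) × (Fin n → ZMod 2) as the product over j : Fin n of the one-qubit spaces ZMod 2 × ZMod 2, and let g : Fin m → P(n) be a family spanning a submodule V of P(n). Assume there is an injective map l : Fin m → Fin n such that for all i i' : Fin m, the X-part satisfies (g i).1 (l i') = 1 if i = i' and (g i).1 (l i') = 0 otherwise (the X-parts of the generators are in reduced form with pivot columns l: the full-X-rank case of the revised standard form). If V decomposes across a set Q of qubit coordinates, then every generator g i is supported entirely inside Q or entirely inside Qᶜ, i.e. g i ∈ C(Q) or g i ∈ C(Qᶜ). -/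
theorem eq_zero_of_pivots_eq_zero {n m : ℕ}
    {g : Fin m → (Fin n → ZMod 2 × ZMod 2)} {l : Fin m → Fin n}
    (hpivot : ∀ i i' : Fin m, (g i (l i')).1 = if i = i' then 1 else 0)
    {v : Fin n → ZMod 2 × ZMod 2} (hv : v ∈ Submodule.span (ZMod 2) (Set.range g))
    (h0 : ∀ k, (v (l k)).1 = 0) : v = 0 := by
  obtain ⟨c, rfl⟩ := (Submodule.mem_span_range_iff_exists_fun (ZMod 2)).1 hv
  have hc : ∀ k, c k = 0 := by
    intro k
    simpa [Finset.sum_apply, Prod.fst_sum, hpivot] using h0 k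
  simp [hc]

/-- A generator whose pivot lies in `S` is supported in `S`, because its summand `b` supported in
`T` vanishes. The sets `S`, `T` stand for `Q`, `Qᶜ` in either order. -/
theorem mem_coordC_of_pivot_mem {n m : ℕ}
    {g : Fin m → (Fin n → ZMod 2 × ZMod 2)} {l : Fin m → Fin n}
    (hpivot : ∀ i i' : Fin m, (g i (l i')).1 = if i = i' then 1 else 0)
    {S T : Set (Fin n)} (hST : ∀ j ∈ S, j ∉ T) {i : Fin m} (hi : l i ∈ S)
    {a b : Fin n → ZMod 2 × ZMod 2}
    (ha : a ∈ coordC (ZMod 2) (fun _ : Fin n => ZMod 2 × ZMod 2) S)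
    (hb : b ∈ coordC (ZMod 2) (fun _ : Fin n => ZMod 2 × ZMod 2) T)
    (hbV : b ∈ Submodule.span (ZMod 2) (Set.range g)) (hab : a + b = g i) :
    g i ∈ coordC (ZMod 2) (fun _ : Fin n => ZMod 2 × ZMod 2) S := by
  have hb0 : b = 0 := by
    refine eq_zero_of_pivots_eq_zero hpivot hbV fun k => ?_
    by_cases hk : l k ∈ S
    · rw [hb _ (hST _ hk)]
      rfl
    · have hik : i ≠ k := by
        rintro rfl
        exact hk hi
      have h := hpivot i k
      rw [← hab, Pi.add_apply, ha _ hk, zero_add, if_neg hik] at h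
      exact h
  rw [← hab, hb0, add_zero]
  exact ha

/-- Full-X-rank case of the paper's Proposition 1: if the generators `g` have X-parts in
reduced form with pivot columns `l`, and the span `V` decomposes across a set `Q` of
qubit coordinates, then each generator is supported entirely inside `Q` or inside `Qᶜ`. -/
theorem generator_in_factor_of_full_X_rank (n m : ℕ)
    (g : Fin m → (Fin n → ZMod 2 × ZMod 2)) (l : Fin m → Fin n)
    (hl : Function.Injective l)
    (hpivot : ∀ i i' : Fin m, (g i (l i')).1 = if i = i' then 1 else 0)
    (V : Submodule (ZMod 2) (Fin n → ZMod 2 × ZMod 2))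
    (hV : V = Submodule.span (ZMod 2) (Set.range g))
    (Q : Set (Fin n))
    (hdec : V = (V ⊓ coordC (ZMod 2) (fun _ : Fin n => ZMod 2 × ZMod 2) Q)
        ⊔ (V ⊓ coordC (ZMod 2) (fun _ : Fin n => ZMod 2 × ZMod 2) Qᶜ)) :
    ∀ i : Fin m,
      g i ∈ coordC (ZMod 2) (fun _ : Fin n => ZMod 2 × ZMod 2) Q
        ∨ g i ∈ coordC (ZMod 2) (fun _ : Fin n => ZMod 2 × ZMod 2) Qᶜ := by
  intro i
  have hgi : g i ∈ V := hV ▸ Submodule.subset_span ⟨i, rfl⟩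
  rw [hdec] at hgi
  obtain ⟨a, ⟨haV, ha⟩, b, ⟨hbV, hb⟩, hab⟩ := Submodule.mem_sup.1 hgi
  rw [hV] at haV hbV
  by_cases hi : l i ∈ Q
  · exact Or.inl (mem_coordC_of_pivot_mem hpivot (T := Qᶜ) (fun j hj hj' => hj' hj) hi ha hb hbV hab)
  · exact Or.inr (mem_coordC_of_pivot_mem hpivot (fun j hj => hj) hi hb ha haV
      (by rw [add_comm, hab]))
end

section
/- Let n k : ℕ with k ≤ n, and let N be the number of ZMod 2-submodules W of P(n) = (Fin n → ZMod 2) × (Fin n → ZMod 2) such that Module.finrank (ZMod 2) W = n − k and W is totally isotropic for the standard symplectic form ω. Then N * ∏_{i=0}^{k-1} (2^{k-i} − 1) = (∏_{i=0}^{k-1} (2^{n-i} − 1)) * (∏_{i=0}^{n-k-1} (2^{n-i} + 1)). -/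
/-!
The proof counts ordered bases of isotropic subspaces in two ways. Put `q = |K|`, `d = dim V`,
`m = n - k`, and call a linearly independent tuple of pairwise orthogonal vectors an isotropic
frame.

* If `s` is an isotropic frame of length `m` for a nondegenerate alternating form, its span `W`
  satisfies `W ≤ Wᗮ` and `dim Wᗮ = d - m`. The vectors extending `s` to a longer frame are those
  of `Wᗮ \ W`, so there are `q ^ (d - m) - q ^ m` of them, and by induction there are
  `∏ i < m, (q ^ (d - i) - q ^ i)` frames of length `m` (`card_isotropicFrame`).
* Every `m`-dimensional isotropic subspace is spanned by exactly `∏ i < m, (q ^ m - q ^ i)`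
  frames, which are its ordered bases (`card_isotropicFrame_eq_mul`).

For `q = 2` and `d = 2 * n`, the factors `2 ^ i` cancel, and
`2 ^ (2 * (n - i)) - 1 = (2 ^ (n - i) - 1) * (2 ^ (n - i) + 1)` gives the mass formula with
denominator `∏ i < m, (2 ^ (m - i) - 1)`. The symmetry `k ↔ n - k` of the Gaussian binomial
(`gauss_mul`) turns this into the denominator `∏ i < k, (2 ^ (k - i) - 1)`.
-/

/-- The standard symplectic form on the binary symplectic phase space of `n` qubits. -/
def symForm (n : ℕ) (u v : (Fin n → ZMod 2) × (Fin n → ZMod 2)) : ZMod 2 :=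
  ∑ j : Fin n, (u.1 j * v.2 j + u.2 j * v.1 j)

open Module

section Frames

variable {K V : Type*} [Field K] [AddCommGroup V] [Module K V]

/-- The isotropic frames of length `m`: linearly independent `m`-tuples of vectors that are
pairwise orthogonal for `B`. The diagonal conditions `B (s i) (s i) = 0` are included. -/
abbrev IsotropicFrame (B : LinearMap.BilinForm K V) (m : ℕ) : Type _ :=
  {s : Fin m → V // LinearIndependent K s ∧ ∀ i j, B (s i) (s j) = 0}

theorem mem_orthogonal_span_range_iff {B : LinearMap.BilinForm K V} {ι : Type*} (s : ι → V)
    (v : V) : v ∈ B.orthogonal (Submodule.span K (Set.range s)) ↔ ∀ i, B (s i) v = 0 := by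
  rw [LinearMap.BilinForm.mem_orthogonal_iff]
  constructor
  · intro h i
    exact h _ (Submodule.subset_span ⟨i, rfl⟩)
  · intro h u hu
    change B u v = 0
    induction hu using Submodule.span_induction with
    | mem x hx => obtain ⟨i, rfl⟩ := hx; exact h i
    | zero => simp
    | add x y _ _ hx hy => simp [hx, hy]
    | smul a x _ hx => simp [hx]

theorem span_le_orthogonal {B : LinearMap.BilinForm K V} {ι : Type*} (s : ι → V)
    (h : ∀ i j, B (s i) (s j) = 0) :
    Submodule.span K (Set.range s) ≤ B.orthogonal (Submodule.span K (Set.range s)) := by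
  rw [Submodule.span_le]
  rintro _ ⟨j, rfl⟩
  exact (mem_orthogonal_span_range_iff s _).2 fun i => h i j

/-- A frame of length `m + 1` is a frame of length `m` together with a vector orthogonal to its
span but not in it. -/
def isotropicFrameSuccEquiv (B : LinearMap.BilinForm K V) (hB : B.IsAlt) (m : ℕ) :
    IsotropicFrame B (m + 1) ≃
      Σ s : IsotropicFrame B m,
        ((B.orthogonal (Submodule.span K (Set.range s.1)) : Set V) \
          (Submodule.span K (Set.range s.1) : Set V) : Set V) where
  toFun s := ⟨⟨Fin.tail s.1, (linearIndependent_finSucc.1 s.2.1).1,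
      fun i j => s.2.2 i.succ j.succ⟩,
    ⟨s.1 0, (mem_orthogonal_span_range_iff _ _).2 fun i => s.2.2 i.succ 0,
      (linearIndependent_finSucc.1 s.2.1).2⟩⟩
  invFun p := ⟨Fin.cons p.2.1 p.1.1,
    linearIndependent_finCons.2 ⟨p.1.2.1, p.2.2.2⟩, by
      have h := (mem_orthogonal_span_range_iff _ _).1 p.2.2.1
      intro i j
      refine Fin.cases ?_ (fun i => ?_) i <;> refine Fin.cases ?_ (fun j => ?_) j
      · simpa using hB _
      · simpa using hB.isRefl _ _ (h j)
      · simpa using h i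
      · simpa using p.1.2.2 i j⟩
  left_inv s := by
    apply Subtype.ext
    exact Fin.cons_self_tail s.1
  right_inv p := rfl

theorem card_isotropicFrame [Finite K] [Finite V] (B : LinearMap.BilinForm K V) (hB : B.IsAlt)
    (hnd : B.Nondegenerate) (m : ℕ) :
    Nat.card (IsotropicFrame B m) =
      ∏ i ∈ Finset.range m, (Nat.card K ^ (finrank K V - i) - Nat.card K ^ i) := by
  induction m with
  | zero =>
    have : Unique (IsotropicFrame B 0) :=
      { default := ⟨Fin.elim0, linearIndependent_empty_type, fun i => i.elim0⟩
        uniq := fun s => Subtype.ext (Subsingleton.elim _ _) }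
    simp
  | succ m ih =>
    have key (s : IsotropicFrame B m) :
        Nat.card ((B.orthogonal (Submodule.span K (Set.range s.1)) : Set V) \
          (Submodule.span K (Set.range s.1) : Set V) : Set V) =
        Nat.card K ^ (finrank K V - m) - Nat.card K ^ m := by
      have hW : finrank K (Submodule.span K (Set.range s.1)) = m := by
        simpa using finrank_span_eq_card s.2.1
      rw [Nat.card_coe_set_eq, Set.ncard_sdiff (span_le_orthogonal s.1 s.2.2),
        ← Nat.card_coe_set_eq, ← Nat.card_coe_set_eq]
      have h1 := Module.natCard_eq_pow_finrank (K := K)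
        (V := B.orthogonal (Submodule.span K (Set.range s.1)))
      have h2 := Module.natCard_eq_pow_finrank (K := K)
        (V := Submodule.span K (Set.range s.1))
      rw [LinearMap.BilinForm.finrank_orthogonal hnd, hW] at h1
      rw [hW] at h2
      exact congrArg₂ _ h1 h2
    have := Fintype.ofFinite (IsotropicFrame B m)
    rw [Nat.card_congr (isotropicFrameSuccEquiv B hB m), Nat.card_sigma,
      Finset.sum_congr rfl fun s _ => key s, Finset.prod_range_succ, ← ih]
    simp

/-- A frame of length `m` is an `m`-dimensional isotropic subspace together with an ordered basis
of it. -/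
noncomputable def isotropicFrameEquivSigma [FiniteDimensional K V]
    (B : LinearMap.BilinForm K V) (m : ℕ) :
    IsotropicFrame B m ≃
      Σ W : {W : Submodule K V // finrank K W = m ∧ ∀ u ∈ W, ∀ w ∈ W, B u w = 0},
        {s : Fin m → W.1 // LinearIndependent K s} where
  toFun s := ⟨⟨Submodule.span K (Set.range s.1), by simpa using finrank_span_eq_card s.2.1,
      fun u hu w hw => span_le_orthogonal s.1 s.2.2 hw u hu⟩,
    ⟨fun i => ⟨s.1 i, Submodule.subset_span ⟨i, rfl⟩⟩,
      LinearIndependent.of_comp (Submodule.subtype _) s.2.1⟩⟩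
  invFun p := ⟨fun i => (p.2.1 i : V), p.2.2.map' (Submodule.subtype _) (Submodule.ker_subtype _),
    fun i j => p.1.2.2 _ (p.2.1 i).2 _ (p.2.1 j).2⟩
  left_inv s := rfl
  right_inv := by
    rintro ⟨⟨W, hW, hiso⟩, s, hs⟩
    -- Writing `s` as a tuple `t` in `V` with values in `W` makes `W = span t` substitutable.
    obtain ⟨t, ht, rfl⟩ : ∃ (t : Fin m → V) (ht : ∀ i, t i ∈ W), s = fun i => ⟨t i, ht i⟩ :=
      ⟨fun i => s i, fun i => (s i).2, rfl⟩
    have hspan : Submodule.span K (Set.range t) = W := by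
      have h : LinearIndependent K t :=
        hs.map' (Submodule.subtype _) (Submodule.ker_subtype _)
      refine Submodule.eq_of_le_of_finrank_eq
        (Submodule.span_le.2 (Set.range_subset_iff.2 ht)) ?_
      rw [hW]
      simpa using finrank_span_eq_card h
    subst hspan
    rfl

theorem card_isotropicFrame_eq_mul [Finite K] [Finite V] (B : LinearMap.BilinForm K V) (m : ℕ) :
    Nat.card (IsotropicFrame B m) =
      Nat.card {W : Submodule K V // finrank K W = m ∧ ∀ u ∈ W, ∀ w ∈ W, B u w = 0} *
        ∏ i ∈ Finset.range m, (Nat.card K ^ m - Nat.card K ^ i) := by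
  have := Fintype.ofFinite K
  have := Fintype.ofFinite
    {W : Submodule K V // finrank K W = m ∧ ∀ u ∈ W, ∀ w ∈ W, B u w = 0}
  have key (W : {W : Submodule K V // finrank K W = m ∧ ∀ u ∈ W, ∀ w ∈ W, B u w = 0}) :
      Nat.card {s : Fin m → W.1 // LinearIndependent K s} =
        ∏ i ∈ Finset.range m, (Nat.card K ^ m - Nat.card K ^ i) := by
    rw [card_linearIndependent W.2.1.ge, W.2.1, Finset.prod_range, Nat.card_eq_fintype_card]
  rw [Nat.card_congr (isotropicFrameEquivSigma B m), Nat.card_sigma,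
    Finset.sum_congr rfl fun W _ => key W]
  simp

end Frames

section SymplecticForm

/-- `symForm n` as a bilinear form. -/
def symBilin (n : ℕ) : LinearMap.BilinForm (ZMod 2) ((Fin n → ZMod 2) × (Fin n → ZMod 2)) :=
  LinearMap.mk₂ (ZMod 2) (symForm n)
    (fun u u' v => by
      simp only [symForm, ← Finset.sum_add_distrib]
      exact Finset.sum_congr rfl fun j _ => by simp; ring)
    (fun c u v => by
      simp only [symForm, smul_eq_mul, Finset.mul_sum]
      exact Finset.sum_congr rfl fun j _ => by simp; ring)
    (fun u v v' => by
      simp only [symForm, ← Finset.sum_add_distrib]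
      exact Finset.sum_congr rfl fun j _ => by simp; ring)
    (fun c u v => by
      simp only [symForm, smul_eq_mul, Finset.mul_sum]
      exact Finset.sum_congr rfl fun j _ => by simp; ring)

theorem symBilin_isAlt (n : ℕ) : (symBilin n).IsAlt := by
  intro u
  change ∑ j : Fin n, (u.1 j * u.2 j + u.2 j * u.1 j) = 0
  refine Finset.sum_eq_zero fun j _ => ?_
  rw [mul_comm (u.2 j)]
  exact CharTwo.add_self_eq_zero _

theorem symBilin_nondegenerate (n : ℕ) : (symBilin n).Nondegenerate := by
  refine (symBilin_isAlt n).isRefl.nondegenerate_iff_separatingLeft.2 fun u hu => ?_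
  -- Pairing with the basis vectors of the Z-part and of the X-part reads off the coordinates.
  refine Prod.ext (funext fun j => ?_) (funext fun j => ?_)
  · have h : ∑ i : Fin n, (u.1 i * (Pi.single j 1 : Fin n → ZMod 2) i + u.2 i * 0) = 0 :=
      hu (0, Pi.single j 1)
    simpa [Pi.single_apply] using h
  · have h : ∑ i : Fin n, (u.1 i * 0 + u.2 i * (Pi.single j 1 : Fin n → ZMod 2) i) = 0 :=
      hu (Pi.single j 1, 0)
    simpa [Pi.single_apply] using h

end SymplecticForm

section Arithmetic

/-- Splitting the product `∏ j ∈ [1, n], (2 ^ j - 1)` into its top `a` and its bottom `n - a`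
factors. -/
theorem prod_two_pow_split {n a : ℕ} (h : a ≤ n) :
    (∏ i ∈ Finset.range a, (2 ^ (n - i) - 1)) *
      ∏ i ∈ Finset.range (n - a), (2 ^ (n - a - i) - 1) =
    ∏ i ∈ Finset.range n, (2 ^ (n - i) - 1) := by
  obtain ⟨b, rfl⟩ := Nat.exists_eq_add_of_le h
  rw [Finset.prod_range_add, Nat.add_sub_cancel_left]
  simp only [Nat.add_sub_add_left]

/-- The symmetry of the Gaussian binomials `[n choose n - k]_2 = [n choose k]_2`, cross-multiplied
by their denominators. -/
theorem gauss_mul {n k : ℕ} (hk : k ≤ n) :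
    (∏ i ∈ Finset.range (n - k), (2 ^ (n - i) - 1)) * ∏ i ∈ Finset.range k, (2 ^ (k - i) - 1) =
      (∏ i ∈ Finset.range k, (2 ^ (n - i) - 1)) *
        ∏ i ∈ Finset.range (n - k), (2 ^ (n - k - i) - 1) := by
  have h := prod_two_pow_split (Nat.sub_le n k)
  rw [Nat.sub_sub_self hk] at h
  rw [h, prod_two_pow_split hk]

theorem two_pow_sub_two_pow {a i : ℕ} (h : i ≤ a) : 2 ^ a - 2 ^ i = 2 ^ i * (2 ^ (a - i) - 1) := by
  rw [Nat.mul_sub, ← pow_add, Nat.add_sub_cancel' h, mul_one]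

theorem two_pow_sub_factor {n i : ℕ} (h : i ≤ n) :
    2 ^ (2 * n - i) - 2 ^ i = 2 ^ i * ((2 ^ (n - i) - 1) * (2 ^ (n - i) + 1)) := by
  rw [two_pow_sub_two_pow (by omega), show 2 * n - i - i = (n - i) * 2 by omega, pow_mul,
    mul_comm (2 ^ (n - i) - 1), ← Nat.sq_sub_sq, one_pow]

end Arithmetic

/-- Mass-formula count of `[[n,k]]` stabilizer groups up to local Pauli equivalence:
the number `N` of totally isotropic subspaces of dimension `n - k` satisfies
`N * ∏ (2^(k-i) - 1) = (∏ (2^(n-i) - 1)) * (∏ (2^(n-i) + 1))`. -/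
theorem card_isotropic_subspaces (n k : ℕ) (hk : k ≤ n) (N : ℕ)
    (hN : N = Nat.card {W : Submodule (ZMod 2) ((Fin n → ZMod 2) × (Fin n → ZMod 2)) //
        Module.finrank (ZMod 2) W = n - k ∧ ∀ u ∈ W, ∀ w ∈ W, symForm n u w = 0}) :
    N * ∏ i ∈ Finset.range k, (2 ^ (k - i) - 1)
      = (∏ i ∈ Finset.range k, (2 ^ (n - i) - 1))
        * ∏ i ∈ Finset.range (n - k), (2 ^ (n - i) + 1) := by
  set m := n - k with hm
  have hcount := (card_isotropicFrame_eq_mul (symBilin n) m).symm.trans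
    (card_isotropicFrame _ (symBilin_isAlt n) (symBilin_nondegenerate n) m)
  have hd : finrank (ZMod 2) ((Fin n → ZMod 2) × (Fin n → ZMod 2)) = 2 * n := by
    simp [two_mul]
  change Nat.card {W : Submodule (ZMod 2) ((Fin n → ZMod 2) × (Fin n → ZMod 2)) //
    finrank (ZMod 2) W = m ∧ ∀ u ∈ W, ∀ w ∈ W, symForm n u w = 0} * _ = _ at hcount
  rw [← hN, hd, Nat.card_zmod,
    Finset.prod_congr rfl fun i hi =>
      two_pow_sub_two_pow (a := m) (Finset.mem_range.1 hi).le,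
    Finset.prod_congr rfl fun i hi =>
      two_pow_sub_factor (n := n) ((Finset.mem_range.1 hi).le.trans (Nat.sub_le n k)),
    Finset.prod_mul_distrib, Finset.prod_mul_distrib, Finset.prod_mul_distrib,
    mul_left_comm] at hcount
  replace hcount := Nat.eq_of_mul_eq_mul_left (Finset.prod_pos fun i _ => by positivity) hcount
  have hpos : 0 < ∏ i ∈ Finset.range m, (2 ^ (m - i) - 1) := by
    refine Finset.prod_pos fun i hi => Nat.sub_pos_of_lt (Nat.one_lt_two_pow ?_)
    have := Finset.mem_range.1 hi
    omega
  have hg := gauss_mul hk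
  rw [← hm] at hg
  refine Nat.eq_of_mul_eq_mul_right hpos ?_
  rw [mul_right_comm, hcount, mul_right_comm, hg, mul_right_comm]
end

section
/- Let n : ℕ, let ω ∈ GaloisField 2 2 with ω ≠ 0 and ω ≠ 1, let λ : P(n) → (Fin n → GaloisField 2 2) be the additive map given by λ(x, z) j = algebraMap (ZMod 2) (GaloisField 2 2) (x j) + ω * algebraMap (ZMod 2) (GaloisField 2 2) (z j), and let T : P(n) → P(n) be the ZMod 2-linear map T(x, z) = (z, x + z). Then for every ZMod 2-submodule V of P(n), the image λ '' V is a GaloisField 2 2-submodule of (Fin n → GaloisField 2 2) if and only if T maps V into V. -/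
/-!
Since `ω² = 1 + ω`, multiplication by `ω` sends `x + ω z` to `z + ω (x + z)`, so the map
`λ (x, z) = x + ω z` intertwines `T (x, z) = (z, x + z)` with scalar multiplication by `ω`.
If the image `λ(V)` is `GF(4)`-linear, it is closed under `ω`, and injectivity of `λ` (that is, linear
independence of `1, ω` over `ZMod 2`) gives `T V ⊆ V`. Conversely, `1, ω` span `GF(4)` over
`ZMod 2`, so an additive code closed under `ω` is closed under every scalar.
-/

/-- Holds because `c ^ 4 = c` on `GF(4)` and `c ^ 4 - c = c (c - 1) (c ^ 2 + c + 1)`. -/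
theorem gf4_sq_eq_one_add {c : GaloisField 2 2} (h0 : c ≠ 0) (h1 : c ≠ 1) :
    c ^ 2 = 1 + c := by
  have hcard : Nat.card (GaloisField 2 2) = 4 := by
    simpa using GaloisField.card 2 2 (by norm_num)
  have : Fintype (GaloisField 2 2) := Fintype.ofFinite _
  have h4 : c ^ 4 = c := by
    have h := FiniteField.pow_card c
    rwa [← Nat.card_eq_fintype_card, hcard] at h
  have h2 : (2 : GaloisField 2 2) = 0 := CharTwo.two_eq_zero
  have hprod : (c * (c - 1)) * (c ^ 2 + c + 1) = 0 := by linear_combination h4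
  have hsum := (mul_eq_zero.mp hprod).resolve_left (mul_ne_zero h0 (sub_ne_zero.mpr h1))
  linear_combination hsum - (1 + c) * h2

/-- `1, ω` span `GF(4)` over `ZMod 2`. -/
theorem gf4_cases {ω : GaloisField 2 2} (hω0 : ω ≠ 0) (hω1 : ω ≠ 1) (c : GaloisField 2 2) :
    ∃ a b : ZMod 2, c = algebraMap (ZMod 2) (GaloisField 2 2) a
      + ω * algebraMap (ZMod 2) (GaloisField 2 2) b := by
  by_cases h0 : c = 0
  · exact ⟨0, 0, by simp [h0]⟩
  by_cases h1 : c = 1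
  · exact ⟨1, 0, by simp [h1]⟩
  have h2 : (2 : GaloisField 2 2) = 0 := CharTwo.two_eq_zero
  -- `c` and `ω` are roots of the same quadratic, whose other root is `1 + ω`
  have hprod : (c - ω) * (c - (1 + ω)) = 0 := by
    linear_combination gf4_sq_eq_one_add h0 h1 + gf4_sq_eq_one_add hω0 hω1 + (1 + ω - c * ω) * h2
  rcases mul_eq_zero.mp hprod with h | h
  · exact ⟨0, 1, by simpa using sub_eq_zero.mp h⟩
  · exact ⟨1, 1, by simpa using sub_eq_zero.mp h⟩

/-- `1, ω` are linearly independent over `ZMod 2`. -/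
theorem gf4_coords_injective {ω : GaloisField 2 2} (hω0 : ω ≠ 0) (hω1 : ω ≠ 1)
    {a b a' b' : ZMod 2}
    (h : algebraMap (ZMod 2) (GaloisField 2 2) a + ω * algebraMap (ZMod 2) (GaloisField 2 2) b
      = algebraMap (ZMod 2) (GaloisField 2 2) a'
        + ω * algebraMap (ZMod 2) (GaloisField 2 2) b') : a = a' ∧ b = b' := by
  have key : ∀ s t : ZMod 2, algebraMap (ZMod 2) (GaloisField 2 2) s
      + ω * algebraMap (ZMod 2) (GaloisField 2 2) t = 0 → s = 0 ∧ t = 0 := by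
    intro s t hst
    have h01 : ∀ u : ZMod 2, u = 0 ∨ u = 1 := by decide
    rcases h01 s with rfl | rfl <;> rcases h01 t with rfl | rfl
    · simp
    · simp [hω0] at hst
    · simp at hst
    · exact absurd (CharTwo.add_eq_zero.mp (by simpa using hst)).symm hω1
  have hd := key (a - a') (b - b') (by simp only [map_sub]; linear_combination h)
  exact ⟨sub_eq_zero.mp hd.1, sub_eq_zero.mp hd.2⟩

/-- Multiplication by `ω` in the coordinates `1, ω` is `(a, b) ↦ (b, a + b)`. -/
theorem gf4_omega_mul {ω : GaloisField 2 2} (hω0 : ω ≠ 0) (hω1 : ω ≠ 1) (a b : ZMod 2) :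
    ω * (algebraMap (ZMod 2) (GaloisField 2 2) a + ω * algebraMap (ZMod 2) (GaloisField 2 2) b)
      = algebraMap (ZMod 2) (GaloisField 2 2) b
        + ω * algebraMap (ZMod 2) (GaloisField 2 2) (a + b) := by
  rw [map_add]
  linear_combination algebraMap (ZMod 2) (GaloisField 2 2) b * gf4_sq_eq_one_add hω0 hω1


/-- A stabilizer code is GF(4)-linear iff `R^{⊗n}` (whose symplectic representation is
`(x, z) ↦ (z, x + z)`) maps the stabilizer group to itself. -/
theorem gf4_linear_iff_R_invariant (n : ℕ) (ω : GaloisField 2 2) (hω0 : ω ≠ 0)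
    (hω1 : ω ≠ 1)
    (V : Submodule (ZMod 2) ((Fin n → ZMod 2) × (Fin n → ZMod 2))) :
    (∃ W : Submodule (GaloisField 2 2) (Fin n → GaloisField 2 2),
        (W : Set (Fin n → GaloisField 2 2)) =
          (fun p : (Fin n → ZMod 2) × (Fin n → ZMod 2) =>
              fun j : Fin n =>
                algebraMap (ZMod 2) (GaloisField 2 2) (p.1 j)
                  + ω * algebraMap (ZMod 2) (GaloisField 2 2) (p.2 j)) '' (V : Set _))
      ↔ ∀ p ∈ V, ((p.2, p.1 + p.2) : (Fin n → ZMod 2) × (Fin n → ZMod 2)) ∈ V := by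
  constructor
  · rintro ⟨W, hW⟩ p hp
    have hpW := hW.symm ▸ Set.mem_image_of_mem _ hp
    have hωW := W.smul_mem ω hpW
    rw [← SetLike.mem_coe, hW] at hωW
    obtain ⟨q, hq, hqe⟩ := hωW
    have hj : ∀ j, q.1 j = p.2 j ∧ q.2 j = p.1 j + p.2 j := fun j =>
      gf4_coords_injective hω0 hω1
        ((congrFun hqe j).trans (gf4_omega_mul hω0 hω1 (p.1 j) (p.2 j)))
    have hqp : q = (p.2, p.1 + p.2) :=
      Prod.ext (funext fun j => (hj j).1) (funext fun j => (hj j).2)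
    exact hqp ▸ hq
  · intro hT
    refine ⟨{ carrier := _, add_mem' := ?_, zero_mem' := ?_, smul_mem' := ?_ }, rfl⟩
    · rintro _ _ ⟨p, hp, rfl⟩ ⟨q, hq, rfl⟩
      refine ⟨p + q, V.add_mem hp hq, funext fun j => ?_⟩
      simp only [Prod.fst_add, Prod.snd_add, Pi.add_apply, map_add]
      ring
    · exact ⟨0, V.zero_mem, funext fun j => by simp⟩
    · rintro c _ ⟨p, hp, rfl⟩
      obtain ⟨a, b, rfl⟩ := gf4_cases hω0 hω1 c
      -- the scalar `a + ω b` acts on `V` as `a + b T`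
      refine ⟨a • p + b • (p.2, p.1 + p.2),
        V.add_mem (V.smul_mem a hp) (V.smul_mem b (hT p hp)), funext fun j => ?_⟩
      have h := gf4_omega_mul hω0 hω1 (p.1 j) (p.2 j)
      simp only [Prod.fst_add, Prod.snd_add, Prod.smul_fst, Prod.smul_snd, Pi.add_apply,
        Pi.smul_apply, smul_eq_mul, map_add, map_mul] at h ⊢
      linear_combination -algebraMap (ZMod 2) (GaloisField 2 2) b * h
end

section
/- Let n : ℕ, let ω ∈ GaloisField 2 2 with ω ≠ 0 and ω ≠ 1, and let C be a ZMod 2-submodule of (Fin n → GaloisField 2 2) (GF(4) regarded as a ZMod 2-algebra) such that ω • v ∈ C for every v ∈ C. Then Module.finrank (ZMod 2) C is even. -/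
/-!
Since `GF(4)` has prime degree `2` over `ZMod 2`, any element `ω` outside the prime field generates
it (`adjoin_eq_top_of_ne_zero_of_ne_one`). Hence a `ZMod 2`-submodule closed under multiplication by
`ω` is closed under all of `GF(4)`, so it is a `GF(4)`-vector space, and the tower law gives its
`ZMod 2`-dimension as twice its `GF(4)`-dimension.
-/

theorem adjoin_eq_top_of_ne_zero_of_ne_one (ω : GaloisField 2 2) (hω0 : ω ≠ 0) (hω1 : ω ≠ 1) :
    Algebra.adjoin (ZMod 2) {ω} = ⊤ := by
  -- Prime degree: the only intermediate subalgebras are `⊥` and `⊤`.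
  have : IsSimpleOrder (Subalgebra (ZMod 2) (GaloisField 2 2)) :=
    Subalgebra.isSimpleOrder_of_finrank_prime _ _
      (by rw [GaloisField.finrank 2 two_ne_zero]; exact Nat.prime_two)
  refine (eq_bot_or_eq_top _).resolve_left fun h => ?_
  have hmem : ω ∈ (⊥ : Subalgebra (ZMod 2) (GaloisField 2 2)) :=
    h ▸ Algebra.self_mem_adjoin_singleton (ZMod 2) ω
  obtain ⟨x, hx⟩ := Algebra.mem_bot.1 hmem
  have hx01 : ∀ x : ZMod 2, x = 0 ∨ x = 1 := by decide
  rcases hx01 x with rfl | rfl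
  · exact hω0 (by rw [← hx, map_zero])
  · exact hω1 (by rw [← hx, map_one])

/-- A `ZMod 2`-linear code over GF(4) that is closed under multiplication by `ω` has even
`ZMod 2`-dimension. -/
theorem finrank_even_of_gf4_linear (n : ℕ) (ω : GaloisField 2 2) (hω0 : ω ≠ 0)
    (hω1 : ω ≠ 1) (C : Submodule (ZMod 2) (Fin n → GaloisField 2 2))
    (hC : ∀ v ∈ C, ω • v ∈ C) :
    Even (Module.finrank (ZMod 2) C) := by
  have hsmul : ∀ a : GaloisField 2 2, ∀ v ∈ C, a • v ∈ C := by
    intro a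
    have ha : a ∈ Algebra.adjoin (ZMod 2) {ω} := by
      rw [adjoin_eq_top_of_ne_zero_of_ne_one ω hω0 hω1]; exact Algebra.mem_top
    induction ha using Algebra.adjoin_induction with
    | mem x hx => rw [Set.mem_singleton_iff.1 hx]; exact hC
    | algebraMap r => intro v hv; rw [algebraMap_smul]; exact C.smul_mem r hv
    | add x y _ _ hx hy => intro v hv; rw [add_smul]; exact C.add_mem (hx v hv) (hy v hv)
    | mul x y _ _ hx hy => intro v hv; rw [mul_smul]; exact hx _ (hy v hv)
  let D : Submodule (GaloisField 2 2) (Fin n → GaloisField 2 2) :=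
    { C.toAddSubmonoid with smul_mem' := fun a v hv => hsmul a v hv }
  have hD : Module.finrank (ZMod 2) C = Module.finrank (ZMod 2) D := rfl
  rw [hD, ← Module.finrank_mul_finrank (ZMod 2) (GaloisField 2 2) D,
    GaloisField.finrank 2 two_ne_zero]
  exact even_two_mul _
end

section
/- Let d : ℕ and let S be a subgroup of the unitary group Matrix.unitaryGroup (Fin d) ℂ such that S is finite, any two elements of S commute, and every g ∈ S with g ≠ 1 has Matrix.trace g = 0. Then for every group homomorphism χ : S →* ℂˣ, the joint eigenspace E_χ := {v : Fin d → ℂ | ∀ g : S, ((g : Matrix (Fin d) (Fin d) ℂ)).mulVec v = (χ g : ℂ) • v}, which is a ℂ-subspace of Fin d → ℂ, satisfies Nat.card S * Module.finrank ℂ E_χ = d. -/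
/-!
Twist the defining action of `S` on `ℂᵈ` by `χ⁻¹`, so that `g` acts by `χ(g)⁻¹ g`. The joint
eigenspace `E_χ` is exactly the space of invariants of this representation, so its dimension is the
average of the twisted character: `|S| dim E_χ = ∑ g, χ(g)⁻¹ tr g`. Since every non-identity
element is traceless, only `g = 1` contributes, with `tr 1 = d`.
-/


/-- The joint eigenspace of a commuting group of unitaries for a character `χ`. -/
noncomputable def jointEigenspace (d : ℕ) (S : Subgroup (Matrix.unitaryGroup (Fin d) ℂ))
    (χ : S →* ℂˣ) : Submodule ℂ (Fin d → ℂ) where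
  carrier := {v | ∀ g : S,
    ((g : Matrix.unitaryGroup (Fin d) ℂ) : Matrix (Fin d) (Fin d) ℂ).mulVec v
      = (χ g : ℂ) • v}
  add_mem' := by
    intro a b ha hb g
    rw [Matrix.mulVec_add, ha g, hb g, smul_add]
  zero_mem' := by
    intro g
    rw [Matrix.mulVec_zero, smul_zero]
  smul_mem' := by
    intro c v hv g
    rw [Matrix.mulVec_smul, hv g, smul_comm]

/-- The representation of `S` on `ℂᵈ` in which `g` acts by `χ(g)⁻¹ g`. -/
noncomputable def twistedRep (d : ℕ) (S : Subgroup (Matrix.unitaryGroup (Fin d) ℂ))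
    (χ : S →* ℂˣ) : Representation ℂ S (Fin d → ℂ) where
  toFun g := Matrix.toLin' ((((χ g)⁻¹ : ℂˣ) : ℂ) •
    ((g : Matrix.unitaryGroup (Fin d) ℂ) : Matrix (Fin d) (Fin d) ℂ))
  map_one' := by simp [Module.End.one_eq_id]
  map_mul' g h := by
    simp [Matrix.toLin'_mul, Module.End.mul_eq_comp, smul_smul, mul_comm]

theorem invariants_twistedRep (d : ℕ) (S : Subgroup (Matrix.unitaryGroup (Fin d) ℂ))
    (χ : S →* ℂˣ) : (twistedRep d S χ).invariants = jointEigenspace d S χ := by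
  ext v
  rw [Representation.mem_invariants]
  refine forall_congr' fun g => ?_
  change Matrix.toLin' _ v = v ↔ _
  rw [map_smul, LinearMap.smul_apply, Matrix.toLin'_apply, Units.val_inv_eq_inv_val,
    inv_smul_eq_iff₀ (χ g).ne_zero]

/-- For a finite commutative group `S` of `d × d` unitaries all of whose non-identity
elements are traceless, every joint eigenspace `E_χ` satisfies `|S| ⬝ dim E_χ = d`. -/
theorem card_mul_finrank_jointEigenspace (d : ℕ)
    (S : Subgroup (Matrix.unitaryGroup (Fin d) ℂ)) (hfin : Finite S)
    (hcomm : ∀ a b : S, a * b = b * a)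
    (htr : ∀ g : S, g ≠ 1 →
      Matrix.trace ((g : Matrix.unitaryGroup (Fin d) ℂ) : Matrix (Fin d) (Fin d) ℂ) = 0)
    (χ : S →* ℂˣ) :
    Nat.card S * Module.finrank ℂ (jointEigenspace d S χ) = d := by
  classical
  have := Fintype.ofFinite S
  have hcard : (Nat.card S : ℂ) ≠ 0 := Nat.cast_ne_zero.mpr Nat.card_pos.ne'
  have : Invertible (Nat.card S : ℂ) := invertibleOfNonzero hcard
  have hchar (g : S) (hg : g ≠ 1) : (twistedRep d S χ).character g = 0 := by
    change LinearMap.trace ℂ _ (Matrix.toLin' _) = 0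
    rw [Matrix.trace_toLin'_eq, Matrix.trace_smul, htr g hg, smul_zero]
  have key := (twistedRep d S χ).card_inv_mul_sum_char_eq_finrank
  rw [invariants_twistedRep, Finset.sum_eq_single 1 (fun g _ hg => hchar g hg) (by simp),
    Representation.char_one, Module.finrank_fin_fun, inv_mul_eq_iff_eq_mul₀ hcard] at key
  exact_mod_cast key.symm
end

section
/- In the group of units of the matrix ring Matrix (Fin 2) (Fin 2) ℂ, let X = !![0, 1; 1, 0], Z = !![1, 0; 0, −1], H = (Real.sqrt 2)⁻¹ • !![1, 1; 1, −1], S = !![1, 0; 0, Complex.I], and ζ₈ = Complex.exp (Real.pi * Complex.I / 4). Let 𝒞 be the subgroup generated by the units with values H and S (the single-qubit Clifford group) and let 𝒩 be the subgroup generated by the units with values ζ₈ • 1, X, and Z. Then 𝒩 ≤ 𝒞, 𝒩 is a normal subgroup of 𝒞, and the quotient group 𝒞 / 𝒩 is isomorphic to Equiv.Perm (Fin 3), the symmetric group on three letters. -/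
/-!
Conjugation by a Clifford matrix permutes the three lines spanned by the Pauli matrices `X, Y, Z`
(up to sign): `H` swaps `X` and `Z`, and `S` swaps `X` and `Y`. This gives a homomorphism
`cliffHom : Cliff →* Equiv.Perm (Fin 3)`, surjective because two transpositions generate `S₃`.

Its kernel is `PauliZeta`. A matrix that commutes up to sign with both `X` and `Z` is a scalar `c`
times one of `1, X, Z, ZX` (`mem_pauliZeta_of_act`). Since `det H = -1` and `det S = i`, Clifford
matrices satisfy `det ^ 4 = 1`, which forces `c ^ 8 = 1`, so `c` is a power of `ζ₈`. Normality is
then that of a kernel, and the isomorphism is the first isomorphism theorem. The inclusion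
`PauliZeta ≤ Cliff` comes from `Z = S²`, `X = H S² H` and `ζ₈ = (H S)³`.
-/

open Matrix

noncomputable def Xmat : Matrix (Fin 2) (Fin 2) ℂ := !![0, 1; 1, 0]

noncomputable def Zmat : Matrix (Fin 2) (Fin 2) ℂ := !![1, 0; 0, -1]

noncomputable def Hmat : Matrix (Fin 2) (Fin 2) ℂ :=
  ((Real.sqrt 2 : ℂ))⁻¹ • !![1, 1; 1, -1]

noncomputable def Smat : Matrix (Fin 2) (Fin 2) ℂ := !![1, 0; 0, Complex.I]

noncomputable def ζ₈ : ℂ := Complex.exp (Real.pi * Complex.I / 4)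

/-- The single-qubit Clifford group `⟨H, S⟩` inside the units of the `2 × 2` complex
matrix ring. -/
noncomputable def Cliff : Subgroup (Matrix (Fin 2) (Fin 2) ℂ)ˣ :=
  Subgroup.closure {u : (Matrix (Fin 2) (Fin 2) ℂ)ˣ |
    (u : Matrix (Fin 2) (Fin 2) ℂ) = Hmat ∨ (u : Matrix (Fin 2) (Fin 2) ℂ) = Smat}

/-- The group `⟨ζ₈ I, X, Z⟩` generated by the Pauli matrices and the scalar `ζ₈`. -/
noncomputable def PauliZeta : Subgroup (Matrix (Fin 2) (Fin 2) ℂ)ˣ :=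
  Subgroup.closure {u : (Matrix (Fin 2) (Fin 2) ℂ)ˣ |
    (u : Matrix (Fin 2) (Fin 2) ℂ) = ζ₈ • (1 : Matrix (Fin 2) (Fin 2) ℂ)
      ∨ (u : Matrix (Fin 2) (Fin 2) ℂ) = Xmat
      ∨ (u : Matrix (Fin 2) (Fin 2) ℂ) = Zmat}

/-! ### Matrix identities and the generators as units -/

/-- The Pauli matrices `X, Y, Z`, indexed by `0, 1, 2`. -/
noncomputable def pauli : Fin 3 → Matrix (Fin 2) (Fin 2) ℂ :=
  ![Xmat, !![0, -Complex.I; Complex.I, 0], Zmat]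

lemma sqrtTwo_inv_sq : ((Real.sqrt 2 : ℂ))⁻¹ * ((Real.sqrt 2 : ℂ))⁻¹ = 1 / 2 := by
  rw [← mul_inv, ← Complex.ofReal_mul, Real.mul_self_sqrt (by norm_num)]
  norm_num

lemma zeta_primitive : IsPrimitiveRoot ζ₈ 8 := by
  have h := Complex.isPrimitiveRoot_exp 8 (by norm_num)
  convert h using 1
  unfold ζ₈
  congr 1
  push_cast
  ring

lemma zeta_eq : ζ₈ = ((Real.sqrt 2 : ℂ))⁻¹ * (1 + Complex.I) := by
  have h : (Real.pi * Complex.I / 4 : ℂ) = ((Real.pi / 4 : ℝ) : ℂ) * Complex.I := by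
    push_cast; ring
  have h2 : ((Real.sqrt 2 : ℂ))⁻¹ = (Real.sqrt 2 : ℂ) / 2 := by
    have h0 : (Real.sqrt 2 : ℂ) ≠ 0 := by simp
    have := sqrtTwo_inv_sq
    field_simp at this ⊢
    exact this
  rw [ζ₈, h, Complex.exp_mul_I, ← Complex.ofReal_cos, ← Complex.ofReal_sin,
    Real.cos_pi_div_four, Real.sin_pi_div_four, h2]
  push_cast
  ring

lemma X_mul_X : Xmat * Xmat = 1 := by
  ext i j; fin_cases i <;> fin_cases j <;> simp [Xmat]

lemma Z_mul_Z : Zmat * Zmat = 1 := by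
  ext i j; fin_cases i <;> fin_cases j <;> simp [Zmat]

lemma H_mul_H : Hmat * Hmat = 1 := by
  have h := sqrtTwo_inv_sq
  ext i j; fin_cases i <;> fin_cases j <;> simp [Hmat, Matrix.mul_apply] <;> grind

/-- `X` as a unit; it is its own inverse. -/
noncomputable def unitX : (Matrix (Fin 2) (Fin 2) ℂ)ˣ := ⟨Xmat, Xmat, X_mul_X, X_mul_X⟩

/-- `Z` as a unit; it is its own inverse. -/
noncomputable def unitZ : (Matrix (Fin 2) (Fin 2) ℂ)ˣ := ⟨Zmat, Zmat, Z_mul_Z, Z_mul_Z⟩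

/-- `H` as a unit; it is its own inverse. -/
noncomputable def unitH : (Matrix (Fin 2) (Fin 2) ℂ)ˣ := ⟨Hmat, Hmat, H_mul_H, H_mul_H⟩

/-- `S` as a unit. -/
noncomputable def unitS : (Matrix (Fin 2) (Fin 2) ℂ)ˣ where
  val := Smat
  inv := !![1, 0; 0, -Complex.I]
  val_inv := by ext i j; fin_cases i <;> fin_cases j <;> simp [Smat]
  inv_val := by ext i j; fin_cases i <;> fin_cases j <;> simp [Smat]

/-- The scalar matrix `ζ₈` as a unit. -/
noncomputable def unitζ : (Matrix (Fin 2) (Fin 2) ℂ)ˣ where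
  val := ζ₈ • 1
  inv := ζ₈⁻¹ • 1
  val_inv := by simp [smul_smul, zeta_primitive.ne_zero (by norm_num)]
  inv_val := by simp [smul_smul, zeta_primitive.ne_zero (by norm_num)]

lemma H_mem : unitH ∈ Cliff := Subgroup.subset_closure (Or.inl rfl)
lemma S_mem : unitS ∈ Cliff := Subgroup.subset_closure (Or.inr rfl)
lemma ζ_mem : unitζ ∈ PauliZeta := Subgroup.subset_closure (Or.inl rfl)
lemma X_mem : unitX ∈ PauliZeta := Subgroup.subset_closure (Or.inr (Or.inl rfl))
lemma Z_mem : unitZ ∈ PauliZeta := Subgroup.subset_closure (Or.inr (Or.inr rfl))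

lemma Z_eq : Zmat = Smat * Smat := by
  ext i j; fin_cases i <;> fin_cases j <;> simp [Zmat, Smat]

lemma X_eq : Xmat = Hmat * (Smat * Smat) * Hmat := by
  have h := sqrtTwo_inv_sq
  ext i j; fin_cases i <;> fin_cases j <;>
    simp [Xmat, Smat, Hmat, Matrix.mul_apply] <;> grind

lemma ζ_eq : ζ₈ • (1 : Matrix (Fin 2) (Fin 2) ℂ) = (Hmat * Smat) ^ 3 := by
  have h := sqrtTwo_inv_sq
  have hI := Complex.I_mul_I
  rw [zeta_eq, pow_three]
  ext i j; fin_cases i <;> fin_cases j <;>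
    simp [Smat, Hmat, Matrix.mul_apply] <;> grind

lemma pauliZeta_le : PauliZeta ≤ Cliff := by
  refine (Subgroup.closure_le _).2 ?_
  rintro u (hu | hu | hu)
  · have : u = (unitH * unitS) ^ 3 := Units.ext (hu.trans ζ_eq)
    exact this ▸ pow_mem (mul_mem H_mem S_mem) 3
  · have : u = unitH * (unitS * unitS) * unitH := Units.ext (hu.trans X_eq)
    exact this ▸ mul_mem (mul_mem H_mem (mul_mem S_mem S_mem)) H_mem
  · have : u = unitS * unitS := Units.ext (hu.trans Z_eq)
    exact this ▸ mul_mem S_mem S_mem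

/-! ### The action on the Pauli axes -/

/-- Pairs `(u, σ)` such that conjugation by `u` sends the `i`-th Pauli matrix to plus or minus the
`σ i`-th one. The condition is written as `u * P = ± P' * u` so that no inverse appears. -/
noncomputable def Act : Subgroup ((Matrix (Fin 2) (Fin 2) ℂ)ˣ × Equiv.Perm (Fin 3)) where
  carrier := {p | ∀ i, (p.1 : Matrix (Fin 2) (Fin 2) ℂ) * pauli i = pauli (p.2 i) * p.1 ∨
    (p.1 : Matrix (Fin 2) (Fin 2) ℂ) * pauli i = -(pauli (p.2 i) * p.1)}
  one_mem' := fun i => by simp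
  mul_mem' := by
    rintro ⟨u, σ⟩ ⟨v, τ⟩ hu hv i
    have h1 := hu (τ i)
    have h2 := hv i
    simp only [Prod.mk_mul_mk, Units.val_mul, Equiv.Perm.mul_apply] at h1 h2 ⊢
    rw [mul_assoc]
    rcases h2 with h2 | h2 <;> rcases h1 with h1 | h1 <;>
      simp [h2, ← mul_assoc, h1]
  inv_mem' := by
    rintro ⟨u, σ⟩ hu i
    have h1 := hu (σ⁻¹ i)
    have hσ : σ (σ⁻¹ i) = i := σ.apply_symm_apply i
    simp only [Prod.inv_mk, hσ] at h1 ⊢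
    -- Multiply `u P = ± P' u` by `u⁻¹` on both sides.
    have e (A B : Matrix (Fin 2) (Fin 2) ℂ) 
        (h : (u : Matrix (Fin 2) (Fin 2) ℂ) * A = B * (u : Matrix (Fin 2) (Fin 2) ℂ)) :
        (↑u⁻¹ : Matrix (Fin 2) (Fin 2) ℂ) * B =
        A * (↑u⁻¹ : Matrix (Fin 2) (Fin 2) ℂ) := by
      rw [Units.inv_mul_eq_iff_eq_mul, ← mul_assoc, h, Units.mul_inv_cancel_right]
    rcases h1 with h1 | h1
    · exact Or.inl (e _ _ h1)
    · right
      rw [← neg_mul] at h1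
      rw [← e _ _ h1, mul_neg, neg_neg]

lemma pauli_injective {i j : Fin 3} (h : pauli i = pauli j ∨ pauli i = -pauli j) : i = j := by
  have e (a b) : pauli i a b = pauli j a b ∨ pauli i a b = -pauli j a b :=
    h.imp (fun h => by rw [h]) (fun h => by rw [h]; rfl)
  have e00 := e 0 0
  have e01 := e 0 1
  have e10 := e 1 0
  clear h e
  fin_cases i <;> fin_cases j <;> simp [pauli, Xmat, Zmat, Complex.ext_iff] at *

/-- The Pauli matrices are distinct up to sign, so a unit induces at most one permutation. -/
lemma act_unique {u : (Matrix (Fin 2) (Fin 2) ℂ)ˣ} {σ τ : Equiv.Perm (Fin 3)}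
    (h1 : (u, σ) ∈ Act) (h2 : (u, τ) ∈ Act) : σ = τ := by
  ext i : 1
  apply pauli_injective
  have h1 := h1 i
  have h2 := h2 i
  simp only at h1 h2
  have e : ∀ A : Matrix (Fin 2) (Fin 2) ℂ, -(A * (u : Matrix (Fin 2) (Fin 2) ℂ)) = (-A) * u :=
    fun A => (neg_mul _ _).symm
  rw [e] at h1 h2
  rcases h1 with h1 | h1 <;> rcases h2 with h2 | h2 <;>
    have h := u.isUnit.mul_right_cancel (h1.symm.trans h2)
  · exact Or.inl h
  · exact Or.inr h
  · exact Or.inr (neg_eq_iff_eq_neg.1 h)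
  · exact Or.inl (neg_injective h)

lemma H_act : (unitH, Equiv.swap 0 2) ∈ Act := by
  have e1 : Equiv.swap (0 : Fin 3) 2 0 = 2 := by decide
  have e2 : Equiv.swap (0 : Fin 3) 2 1 = 1 := by decide
  have e3 : Equiv.swap (0 : Fin 3) 2 2 = 0 := by decide
  have h1 : Hmat * Xmat = Zmat * Hmat := by
    ext i j; fin_cases i <;> fin_cases j <;> simp [Hmat, Xmat, Zmat]
  have h2 : Hmat * pauli 1 = -(pauli 1 * Hmat) := by
    ext i j; fin_cases i <;> fin_cases j <;> simp [Hmat, pauli, Matrix.mul_apply, mul_comm]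
  have h3 : Hmat * Zmat = Xmat * Hmat := by
    ext i j; fin_cases i <;> fin_cases j <;> simp [Hmat, Xmat, Zmat]
  intro i
  fin_cases i
  · left; simpa [e1, unitH, pauli] using h1
  · right; simpa [e2, unitH] using h2
  · left; simpa [e3, unitH, pauli] using h3

lemma S_act : (unitS, Equiv.swap 0 1) ∈ Act := by
  have e1 : Equiv.swap (0 : Fin 3) 1 0 = 1 := by decide
  have e2 : Equiv.swap (0 : Fin 3) 1 1 = 0 := by decide
  have e3 : Equiv.swap (0 : Fin 3) 1 2 = 2 := by decide
  have h1 : Smat * pauli 0 = pauli 1 * Smat := by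
    ext i j; fin_cases i <;> fin_cases j <;> simp [Smat, Xmat, pauli]
  have h2 : Smat * pauli 1 = -(pauli 0 * Smat) := by
    ext i j; fin_cases i <;> fin_cases j <;> simp [Smat, Xmat, pauli]
  have h3 : Smat * pauli 2 = pauli 2 * Smat := by
    ext i j; fin_cases i <;> fin_cases j <;> simp [Smat, Zmat, pauli]
  intro i
  fin_cases i
  · left; simpa [e1, unitS] using h1
  · right; simpa [e2, unitS] using h2
  · left; simpa [e3, unitS] using h3

/-- Every Clifford matrix permutes the Pauli axes, since the generators do. -/
lemma exists_act {u : (Matrix (Fin 2) (Fin 2) ℂ)ˣ} (hu : u ∈ Cliff) : ∃ σ, (u, σ) ∈ Act := by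
  have : Cliff ≤ Act.map (MonoidHom.fst _ _) := by
    refine (Subgroup.closure_le _).2 ?_
    rintro u (hu | hu)
    · exact ⟨_, H_act, Units.ext hu.symm⟩
    · exact ⟨_, S_act, Units.ext hu.symm⟩
  obtain ⟨⟨v, σ⟩, h, rfl⟩ := this hu
  exact ⟨σ, h⟩

lemma pauliZeta_act {u : (Matrix (Fin 2) (Fin 2) ℂ)ˣ} (hu : u ∈ PauliZeta) : (u, 1) ∈ Act := by
  have : PauliZeta ≤ Act.comap (MonoidHom.inl _ _) := by
    refine (Subgroup.closure_le _).2 ?_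
    rintro u (hu | hu | hu) i
    · left; simp [hu]
    · fin_cases i
      · left; simp [hu, pauli]
      · right; ext a b; fin_cases a <;> fin_cases b <;> simp [hu, pauli, Xmat]
      · right; ext a b; fin_cases a <;> fin_cases b <;> simp [hu, pauli, Xmat, Zmat]
    · fin_cases i
      · right; ext a b; fin_cases a <;> fin_cases b <;> simp [hu, pauli, Xmat, Zmat]
      · right; ext a b; fin_cases a <;> fin_cases b <;> simp [hu, pauli, Zmat]
      · left; simp [hu, pauli]
  exact this hu

/-! ### Matrices acting trivially -/

/-- The generators `H` and `S` have determinants `-1` and `i`. -/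
lemma cliff_det {u : (Matrix (Fin 2) (Fin 2) ℂ)ˣ} (hu : u ∈ Cliff) :
    (u : Matrix (Fin 2) (Fin 2) ℂ).det ^ 4 = 1 := by
  have : Cliff ≤ ((powMonoidHom 4).comp (Units.map
      (Matrix.detMonoidHom (n := Fin 2) (R := ℂ)))).ker := by
    refine (Subgroup.closure_le _).2 ?_
    rintro u (hu | hu)
    · have h := sqrtTwo_inv_sq
      have hd : Hmat.det = -1 := by simp [Hmat, Matrix.det_fin_two]; grind
      ext
      simp [hu, hd]
      norm_num
    · have hd : Smat.det = Complex.I := by simp [Smat, Matrix.det_fin_two]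
      ext
      simp [hu, hd]
  simpa [MonoidHom.mem_ker, Units.ext_iff] using this hu

/-- A scalar multiple `c • v` of an element of `PauliZeta` lies in `PauliZeta` as soon as its
determinant is a fourth root of unity: then `c ^ 8 = 1`, so `c` is a power of `ζ₈`. -/
lemma mem_of_eq_smul {u v : (Matrix (Fin 2) (Fin 2) ℂ)ˣ} (hv : v ∈ PauliZeta) {c : ℂ}
    (h : (u : Matrix (Fin 2) (Fin 2) ℂ) = c • (v : Matrix (Fin 2) (Fin 2) ℂ))
    (hd : (u : Matrix (Fin 2) (Fin 2) ℂ).det ^ 4 = 1) : u ∈ PauliZeta := by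
  have hc : c ^ 8 = 1 := by
    rw [h, Matrix.det_smul, mul_pow, cliff_det (pauliZeta_le hv)] at hd
    simpa [← pow_mul] using hd
  obtain ⟨k, -, rfl⟩ := zeta_primitive.eq_pow_of_pow_eq_one hc
  have : u = unitζ ^ k * v := by
    ext1
    simp [h, unitζ, smul_pow]
  exact this ▸ mul_mem (pow_mem ζ_mem k) hv

/-- The only Clifford matrices fixing every Pauli axis are the powers of `ζ₈` times one of
`1, X, Z, ZX`. -/
lemma mem_pauliZeta_of_act {u : (Matrix (Fin 2) (Fin 2) ℂ)ˣ} (hu : u ∈ Cliff)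
    (h : (u, 1) ∈ Act) : u ∈ PauliZeta := by
  have hd := cliff_det hu
  have hX := h 0
  have hZ := h 2
  simp only [pauli, Equiv.Perm.coe_one, id_eq, Matrix.cons_val] at hX hZ
  have ent {A B : Matrix (Fin 2) (Fin 2) ℂ} (h : A = B) (a b) : A a b = B a b := by rw [h]
  -- The signs of `X` and `Z` under conjugation single out one of `1, X, Z, ZX`.
  rcases hX with hX | hX <;> rcases hZ with hZ | hZ <;>
    have x00 := ent hX 0 0 <;> have x01 := ent hX 0 1 <;>
    have z00 := ent hZ 0 0 <;> have z01 := ent hZ 0 1 <;>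
    have z10 := ent hZ 1 0 <;> have z11 := ent hZ 1 1 <;>
    simp [Xmat, Zmat, Matrix.mul_apply, Matrix.vecMul, dotProduct, Fin.sum_univ_two]
      at x00 x01 z00 z01 z10 z11
  · refine mem_of_eq_smul (one_mem _) (c := u.1 0 0) ?_ hd
    ext a b; fin_cases a <;> fin_cases b <;> simp <;> grind
  · refine mem_of_eq_smul X_mem (c := u.1 0 1) ?_ hd
    ext a b; fin_cases a <;> fin_cases b <;> simp [unitX, Xmat] <;> grind
  · refine mem_of_eq_smul Z_mem (c := u.1 0 0) ?_ hd
    ext a b; fin_cases a <;> fin_cases b <;> simp [unitZ, Zmat] <;> grind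
  · refine mem_of_eq_smul (mul_mem Z_mem X_mem) (c := u.1 0 1) ?_ hd
    ext a b; fin_cases a <;> fin_cases b <;> simp [unitZ, Zmat, unitX, Xmat] <;> grind

/-! ### The homomorphism to the symmetric group -/

/-- The permutation of the axes `X, Y, Z` induced by conjugation with a Clifford matrix. -/
noncomputable def cliffHom : Cliff →* Equiv.Perm (Fin 3) :=
  MonoidHom.mk' (fun u => (exists_act u.2).choose) fun u v => by
    have h := Act.mul_mem (exists_act u.2).choose_spec (exists_act v.2).choose_spec
    rw [Prod.mk_mul_mk] at h
    exact act_unique (exists_act (u * v).2).choose_spec h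

lemma cliffHom_eq_iff (u : Cliff) (σ : Equiv.Perm (Fin 3)) :
    cliffHom u = σ ↔ ((u : (Matrix (Fin 2) (Fin 2) ℂ)ˣ), σ) ∈ Act :=
  ⟨fun h => h ▸ (exists_act u.2).choose_spec,
    fun h => act_unique (exists_act u.2).choose_spec h⟩

lemma cliffHom_surjective : Function.Surjective cliffHom := by
  have hH : Equiv.swap 0 2 ∈ cliffHom.range :=
    ⟨⟨unitH, H_mem⟩, (cliffHom_eq_iff _ _).2 H_act⟩
  have hS : Equiv.swap 0 1 ∈ cliffHom.range :=
    ⟨⟨unitS, S_mem⟩, (cliffHom_eq_iff _ _).2 S_act⟩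
  have key : ∀ σ : Equiv.Perm (Fin 3), σ = 1 ∨ σ = Equiv.swap 0 2 ∨ σ = Equiv.swap 0 1 ∨
      σ = Equiv.swap 0 2 * Equiv.swap 0 1 ∨ σ = Equiv.swap 0 1 * Equiv.swap 0 2 ∨
      σ = Equiv.swap 0 2 * Equiv.swap 0 1 * Equiv.swap 0 2 := by decide
  intro σ
  change σ ∈ cliffHom.range
  rcases key σ with rfl | rfl | rfl | rfl | rfl | rfl
  · exact one_mem _
  · exact hH
  · exact hS
  · exact mul_mem hH hS
  · exact mul_mem hS hH
  · exact mul_mem (mul_mem hH hS) hH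

lemma cliffHom_ker : cliffHom.ker = PauliZeta.subgroupOf Cliff := by
  ext u
  rw [MonoidHom.mem_ker, cliffHom_eq_iff, Subgroup.mem_subgroupOf]
  exact ⟨mem_pauliZeta_of_act u.2, pauliZeta_act⟩


/-- `⟨ζ₈ I, X, Z⟩` is a normal subgroup of the single-qubit Clifford group `⟨H, S⟩`, and
the quotient is isomorphic to the symmetric group on three letters. -/
theorem clifford_quotient_pauli_iso_symmThree :
    PauliZeta ≤ Cliff ∧ (PauliZeta.subgroupOf Cliff).Normal ∧
      ∀ [inst : (PauliZeta.subgroupOf Cliff).Normal],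
        Nonempty ((Cliff ⧸ PauliZeta.subgroupOf Cliff) ≃* Equiv.Perm (Fin 3)) := by
  have hn : (PauliZeta.subgroupOf Cliff).Normal := cliffHom_ker ▸ cliffHom.normal_ker
  refine ⟨pauliZeta_le, hn, ?_⟩
  intro inst
  exact ⟨(QuotientGroup.quotientMulEquivOfEq cliffHom_ker.symm).trans
    (QuotientGroup.quotientKerEquivOfSurjective cliffHom cliffHom_surjective)⟩
end

section
/- Let n : ℕ and let u v : Fin n → (ZMod 2 × ZMod 2) be nonzero. Define the weight wt w = card {j | w j ≠ 0}. Then the following are equivalent: (i) wt u = wt v; (ii) there exist a permutation π : Equiv.Perm (Fin n) and a family g : Fin n → ((ZMod 2 × ZMod 2) ≃ₗ[ZMod 2] (ZMod 2 × ZMod 2)) of ZMod 2-linear automorphisms such that v j = g j (u (π⁻¹ j)) for every j : Fin n. Consequently, for n ≥ 1 the equivalence relation defined by (ii) on the nonzero elements of Fin n → (ZMod 2 × ZMod 2) has exactly n equivalence classes. -/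
/-!
A permutation moves the support of a phase-space vector and invertible linear maps preserve it, so
LCΠ-equivalent vectors have equal weight. Conversely, equal weight gives a bijection between the
supports, which extends to a permutation of the qubits; on each qubit the two entries are then
both zero or both nonzero, and the linear automorphisms of a vector space act transitively on its
nonzero vectors (`exists_linearEquiv_apply_eq`). Hence the weight is a complete invariant; on
nonzero vectors its values are exactly `1, …, n`, which counts the classes.
-/

/-- Two vectors that are both zero or both nonzero are related by a linear automorphism: the
isomorphism between the lines they span extends to the whole space. -/
lemma exists_linearEquiv_apply_eq {K V : Type*} [Field K] [AddCommGroup V] [Module K V]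
    [FiniteDimensional K V] (a b : V) (h : a ≠ 0 ↔ b ≠ 0) : ∃ g : V ≃ₗ[K] V, b = g a := by
  by_cases ha : a = 0
  · have hb : b = 0 := by simpa [ha] using h
    exact ⟨LinearEquiv.refl K V, by simp [ha, hb]⟩
  · have hb : b ≠ 0 := h.1 ha
    let ea := LinearEquiv.toSpanNonzeroSingleton K V a ha
    obtain ⟨g, hg⟩ := Submodule.exists_linearEquiv_restrict_eq
      (ea.symm.trans (LinearEquiv.toSpanNonzeroSingleton K V b hb))
    have h1 := hg (ea 1)
    rw [LinearEquiv.trans_apply, LinearEquiv.symm_apply_apply] at h1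
    exact ⟨g, by simpa [ea] using h1⟩

/-- The weight is a complete invariant of LCΠ-equivalence. -/
lemma card_support_eq_iff {n : ℕ} (u v : Fin n → ZMod 2 × ZMod 2) :
    (Finset.univ.filter fun j => u j ≠ 0).card = (Finset.univ.filter fun j => v j ≠ 0).card
      ↔ ∃ (π : Equiv.Perm (Fin n))
          (g : Fin n → (ZMod 2 × ZMod 2) ≃ₗ[ZMod 2] (ZMod 2 × ZMod 2)),
          ∀ j : Fin n, v j = g j (u (π⁻¹ j)) := by
  constructor
  · intro h
    obtain ⟨e⟩ : Nonempty ({j // u j ≠ 0} ≃ {j // v j ≠ 0}) := by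
      rw [← Fintype.card_eq, Fintype.card_subtype, Fintype.card_subtype, h]
    let π : Equiv.Perm (Fin n) := e.extendSubtype
    have hπ (i : Fin n) : u i ≠ 0 ↔ v (π i) ≠ 0 :=
      ⟨e.extendSubtype_mem i, fun hv => by_contra fun hu => e.extendSubtype_not_mem i hu hv⟩
    have hg (j : Fin n) : ∃ g : (ZMod 2 × ZMod 2) ≃ₗ[ZMod 2] (ZMod 2 × ZMod 2),
        v j = g (u (π⁻¹ j)) :=
      exists_linearEquiv_apply_eq _ _ (by simpa using hπ (π⁻¹ j))
    choose g hg using hg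
    exact ⟨π, g, hg⟩
  · rintro ⟨π, g, h⟩
    refine Finset.card_equiv π fun i => ?_
    simp [h]

/-- Two nonzero vectors of the `n`-qubit binary symplectic phase space are LCΠ-equivalent
iff they have the same weight; consequently for `n ≥ 1` there are exactly `n` equivalence
classes of nonzero vectors. -/
theorem weight_eq_iff_lc_perm_equiv (n : ℕ) :
    (∀ u v : Fin n → ZMod 2 × ZMod 2, u ≠ 0 → v ≠ 0 →
      ((Finset.univ.filter fun j => u j ≠ 0).card
          = (Finset.univ.filter fun j => v j ≠ 0).card
        ↔ ∃ (π : Equiv.Perm (Fin n))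
            (g : Fin n → (ZMod 2 × ZMod 2) ≃ₗ[ZMod 2] (ZMod 2 × ZMod 2)),
            ∀ j : Fin n, v j = g j (u (π⁻¹ j))))
    ∧ (1 ≤ n →
        Nat.card (Quot (fun u v : {w : Fin n → ZMod 2 × ZMod 2 // w ≠ 0} =>
          ∃ (π : Equiv.Perm (Fin n))
            (g : Fin n → (ZMod 2 × ZMod 2) ≃ₗ[ZMod 2] (ZMod 2 × ZMod 2)),
            ∀ j : Fin n, v.1 j = g j (u.1 (π⁻¹ j)))) = n) := by
  refine ⟨fun u v _ _ => card_support_eq_iff u v, fun _ => ?_⟩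
  let wt (w : Fin n → ZMod 2 × ZMod 2) : ℕ := (Finset.univ.filter fun j => w j ≠ 0).card
  have hwt (w : {w : Fin n → ZMod 2 × ZMod 2 // w ≠ 0}) : wt w.1 ∈ Finset.Icc 1 n := by
    rw [Finset.mem_Icc]
    constructor
    · obtain ⟨j, hj⟩ := Function.ne_iff.1 w.2
      exact Finset.card_pos.2 ⟨j, by simpa using hj⟩
    · simpa [wt] using Finset.card_filter_le Finset.univ fun j => w.1 j ≠ 0
  rw [Nat.card_eq_of_bijective (β := Finset.Icc 1 n)
    (Quot.lift (fun w => ⟨wt w.1, hwt w⟩) fun u v h =>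
      Subtype.ext ((card_support_eq_iff u.1 v.1).2 h))]
  · rw [Nat.card_eq_fintype_card, Fintype.card_coe, Nat.card_Icc, Nat.add_sub_cancel]
  constructor
  · rintro ⟨u⟩ ⟨v⟩ h
    exact Quot.sound ((card_support_eq_iff u.1 v.1).1 (congrArg Subtype.val h))
  · rintro ⟨k, hk⟩
    rw [Finset.mem_Icc] at hk
    -- The vector with entry `X` on the first `k` qubits and identity elsewhere has weight `k`.
    let w : Fin n → ZMod 2 × ZMod 2 := fun j => if (j : ℕ) < k then (1, 0) else 0
    have hw : wt w = k := by
      simp [wt, w, Fin.card_filter_val_lt, hk.2]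
    have hw0 : w ≠ 0 := by
      intro h0
      have : wt w = 0 := by simp [wt, h0]
      omega
    exact ⟨Quot.mk _ ⟨w, hw0⟩, Subtype.ext hw⟩
end
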